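/- Let k ∈ {0,1}, let g^{jl} : ℝ × ℝ^{d+1} → ℝ (j,l = 1,…,d) be continuous, let F : ℝ × ℝ^{d+1} → ℝ be C¹ with F(0,0) = 0, and let f, g ∈ ℓ^{2,k}(ℤ^d). Consider the quasilinear wave equation ∂_t² u − Σ_{j,l} g^{jl}(u,u')·∂_j∂_l u = F(u,u') on ℤ^d × [0,T] with small initial data u(·,0) = εf, ∂_t u(·,0) = εg. Then there exist δ > 0 and a constant K > 0 (depending on F, the g^{jl}, f, g, and d) such that for every 0 < ε < δ the maximal existence time T*(ε) of the solution in C²([0,T]; ℓ^{2,k}(ℤ^d)) satisfies T*(ε) ≥ K·log(log(1/ε)). -/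

import Mathlib

/-!
The idea is to treat the equation as an ordinary differential equation in a Hilbert space, which is
possible because discrete derivatives are bounded operators.

*Boundedness of `∂ⱼ` on `ℓ^{2,k}`, `k ≤ 1`.* The translates of `a ↦ 1/(2a+1)` are orthogonal in
`ℓ²(ℤ)`, so convolution with this kernel is a multiple of an isometry. By partial fractions both the
kernel `φⱼ` and `xⱼ φⱼ` are combinations of two such kernels (`exists_pd_ops`). Hence `∂ⱼ` and the
commutator `[xⱼ, ∂ⱼ]` are bounded on `ℓ²`, and conjugating `∂ⱼ` by the weight `⟨x⟩^k` gives a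
bounded operator on `ℓ²` (`exists_weighted_pd`).

*The vector field.* For the weighted unknowns `(U, V) = ⟨x⟩^k (u, ∂ₜu)` the equation becomes
`(U, V)' = G(U, V)`. On the unit ball the pointwise states stay in a compact set on which `F` is
Lipschitz, with `F(0,0) = 0`, and the `g^{jl}` are bounded and uniformly continuous. Therefore `G` has
linear growth `‖G p‖ ≤ C ‖p‖` (`norm_field_le`) and is uniformly continuous (`field_uniform`).

*Existence.* As the `g^{jl}` are only continuous, `G` need not be Lipschitz, and Peano's theorem fails
for general continuous vector fields in infinite dimension. Here, however, each coordinate of `G` is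
a continuous function of finitely many bounded functionals, so `G` has a weakly closed graph
(`field_weak`). Weak limits of Euler polygons along an ultrafilter then give a solution on `[0, T]`
as long as `‖p₀‖ exp (C T) ≤ 1` (`peano_weak`).

*Lifespan.* For data of size `ε`, the condition `T < C⁻¹ log log (1/ε)` gives
`ε exp (C T) ≤ ε log (1/ε) ≤ 2 √ε` (`mul_log_le`), which is small.
-/

open scoped BigOperators ENNReal NNReal
open MeasureTheory Filter

noncomputable section

/-- Kernel `φⱼ` of the discrete partial derivative on `ℤ^d`:
`φⱼ(m) = -4i/(π(4a²-1))` if `m = a·eⱼ`, and `0` otherwise. -/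
def phi (d : ℕ) (j : Fin d) (m : Fin d → ℤ) : ℂ :=
  if ∀ i, i ≠ j → m i = 0 then
    (-4 * Complex.I) / ((Real.pi : ℂ) * (4 * (m j : ℂ) ^ 2 - 1))
  else 0

/-- Discrete convolution on `ℤ^d`. -/
def dconv {d : ℕ} (u v : (Fin d → ℤ) → ℂ) (k : Fin d → ℤ) : ℂ :=
  ∑' m, u m * v (k - m)

/-- Discrete partial derivative `∂ⱼ u = u ∗ φⱼ`. -/
def pd {d : ℕ} (j : Fin d) (u : (Fin d → ℤ) → ℂ) : (Fin d → ℤ) → ℂ :=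
  dconv u (phi d j)

/-- Japanese bracket `⟨m⟩ = (1+|m|²)^{1/2}`. -/
def jap {d : ℕ} (m : Fin d → ℤ) : ℝ :=
  Real.sqrt (1 + ∑ i, ((m i : ℝ)) ^ 2)

open scoped Classical in
/-- `ℓ^p` norm on `ℤ^d` (valued in `ℝ≥0∞`), `1 ≤ p ≤ ∞`. -/
def lpn {d : ℕ} (p : ℝ≥0∞) (f : (Fin d → ℤ) → ℂ) : ℝ≥0∞ :=
  if p = ⊤ then ⨆ m, (‖f m‖₊ : ℝ≥0∞)
  else (∑' m, (‖f m‖₊ : ℝ≥0∞) ^ p.toReal) ^ (1 / p.toReal)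

/-- Weighted `ℓ^{2,k}` norm: the `ℓ²` norm of `m ↦ ⟨m⟩^k f(m)`. -/
def w2 {d : ℕ} (k : ℕ) (f : (Fin d → ℤ) → ℂ) : ℝ≥0∞ :=
  lpn 2 (fun m => ((jap m ^ k : ℝ) : ℂ) * f m)

/-- Discrete Laplacian on `ℤ^d`. -/
def lap {d : ℕ} (u : (Fin d → ℤ) → ℂ) (x : Fin d → ℤ) : ℂ :=
  ∑ j, (u (x + Pi.single j 1) + u (x - Pi.single j 1) - 2 * u x)

/-- Continuity of a curve `t ↦ f(·,t)` into `ℓ^{2,k}(ℤ^d)` on a set `S` of times. -/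
def ContW {d : ℕ} (k : ℕ) (S : Set ℝ) (f : ℝ → (Fin d → ℤ) → ℂ) : Prop :=
  ∀ t ∈ S, Tendsto (fun s => w2 k (fun m => f s m - f t m))
    (nhdsWithin t S) (nhds (0 : ℝ≥0∞))

/-- `f'` is the derivative (in the `ℓ^{2,k}(ℤ^d)` norm) of the curve `t ↦ f(·,t)` on `S`. -/
def DerivW {d : ℕ} (k : ℕ) (S : Set ℝ) (f f' : ℝ → (Fin d → ℤ) → ℂ) : Prop :=
  ∀ t ∈ S, Tendsto
    (fun s => w2 k (fun m => (s - t)⁻¹ • (f s m - f t m) - f' t m))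
    (nhdsWithin t (S \ {t})) (nhds (0 : ℝ≥0∞))

/-- `u ∈ C²(S; ℓ^{2,k}(ℤ^d))`, with first and second time derivatives `u1`, `u2`. -/
structure IsC2 {d : ℕ} (k : ℕ) (S : Set ℝ) (u u1 u2 : ℝ → (Fin d → ℤ) → ℂ) : Prop where
  mem0 : ∀ t ∈ S, w2 k (u t) < ⊤
  mem1 : ∀ t ∈ S, w2 k (u1 t) < ⊤
  mem2 : ∀ t ∈ S, w2 k (u2 t) < ⊤
  cont0 : ContW k S u
  cont1 : ContW k S u1
  cont2 : ContW k S u2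
  hder1 : DerivW k S u u1
  hder2 : DerivW k S u1 u2

/-- The pointwise state `(u, u') = (u, ∂ₜu, ∂₁u, …, ∂_d u)` of a solution. -/
def state {d : ℕ} (u u1 : ℝ → (Fin d → ℤ) → ℂ) (t : ℝ) (x : Fin d → ℤ) :
    ℂ × (Fin (d + 1) → ℂ) :=
  (u t x, Fin.cons (u1 t x) fun i => pd i (u t) x)

/-- `u` (with time derivatives `u1`, `u2`) is a classical solution in
`C²(S; ℓ^{2,k}(ℤ^d))` of the quasilinear wave equation
`∂ₜ²u - Σ_{j,l} g^{jl}(u,u')∂ⱼ∂ₗu = F(u,u')` with data `u(·,0)=f`, `∂ₜu(·,0)=g`. -/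
def QLSol (d k : ℕ) (gc : Fin d → Fin d → ℂ × (Fin (d + 1) → ℂ) → ℝ)
    (F : ℂ × (Fin (d + 1) → ℂ) → ℂ) (f g : (Fin d → ℤ) → ℂ)
    (S : Set ℝ) (u u1 u2 : ℝ → (Fin d → ℤ) → ℂ) : Prop :=
  IsC2 k S u u1 u2 ∧
    (∀ t ∈ S, ∀ x,
      u2 t x - ∑ j, ∑ l, (gc j l (state u u1 t x) : ℂ) * pd j (pd l (u t)) x =
        F (state u u1 t x)) ∧
    (∀ x, u 0 x = f x) ∧ (∀ x, u1 0 x = g x)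

/-! ### Peano existence in a Hilbert space by weak compactness -/

section Peano

variable {E : Type*} [NormedAddCommGroup E] [InnerProductSpace ℝ E]

/-- Weak convergence in a real Hilbert space along a filter on the indices. -/
def WeakLim {α : Type*} (l : Filter α) (x : α → E) (y : E) : Prop :=
  ∀ z : E, Tendsto (fun n => inner ℝ z (x n)) l (nhds (inner ℝ z y))

lemma WeakLim.sub {α : Type*} {l : Filter α} {x x' : α → E} {y y' : E}
    (h : WeakLim l x y) (h' : WeakLim l x' y') :
    WeakLim l (fun n => x n - x' n) (y - y') := by
  intro z
  simpa [inner_sub_right] using (h z).sub (h' z)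

lemma WeakLim.smul {α : Type*} {l : Filter α} {x : α → E} {y : E} {c : α → ℝ} {a : ℝ}
    (hc : Tendsto c l (nhds a)) (h : WeakLim l x y) :
    WeakLim l (fun n => c n • x n) (a • y) := by
  intro z
  simpa [inner_smul_right] using hc.mul (h z)

lemma WeakLim.clm [CompleteSpace E] {α : Type*} {l : Filter α} {x : α → E} {y : E}
    (h : WeakLim l x y) (φ : E →L[ℝ] ℝ) : Tendsto (fun n => φ (x n)) l (nhds (φ y)) := by
  have := h ((InnerProductSpace.toDual ℝ E).symm φ)
  simpa [InnerProductSpace.toDual_symm_apply] using this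

lemma WeakLim.clm_complex [CompleteSpace E] {α : Type*} {l : Filter α} {x : α → E} {y : E}
    (h : WeakLim l x y) (φ : E →L[ℝ] ℂ) : Tendsto (fun n => φ (x n)) l (nhds (φ y)) := by
  have h1 := h.clm (Complex.reCLM.comp φ)
  have h2 := h.clm (Complex.imCLM.comp φ)
  have h3 := ((Complex.continuous_ofReal.tendsto _).comp h1).add
    (((Complex.continuous_ofReal.tendsto _).comp h2).mul_const Complex.I)
  simpa [Function.comp_def, Complex.re_add_im] using h3

/-- Weak lower semicontinuity of the norm. -/
lemma WeakLim.norm_le {α : Type*} {l : Filter α} [l.NeBot] {x : α → E} {y : E}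
    (h : WeakLim l x y) {b : α → ℝ} {c : ℝ} (hb : Tendsto b l (nhds c))
    (hx : ∀ᶠ n in l, ‖x n‖ ≤ b n) : ‖y‖ ≤ c := by
  have h1 : inner ℝ y y ≤ ‖y‖ * c := by
    refine le_of_tendsto_of_tendsto (h y) (hb.const_mul ‖y‖) ?_
    filter_upwards [hx] with n hn
    exact (real_inner_le_norm _ _).trans (by gcongr)
  rw [real_inner_self_eq_norm_sq] at h1
  have hc : 0 ≤ c := ge_of_tendsto hb (by
    filter_upwards [hx] with n hn using (norm_nonneg _).trans hn)
  rcases (norm_nonneg y).eq_or_lt with h0 | h0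
  · rw [← h0]; exact hc
  · nlinarith

/-- Weak compactness of bounded sets, phrased with ultrafilters. -/
lemma exists_weakLim [CompleteSpace E] {α : Type*} (U : Ultrafilter α) (x : α → E) (R : ℝ)
    (hx : ∀ᶠ n in (U : Filter α), ‖x n‖ ≤ R) : ∃ y : E, WeakLim (U : Filter α) x y := by
  have hc := WeakDual.isCompact_closedBall (𝕜 := ℝ) (E := E) 0 R
  let ψ : α → WeakDual ℝ E :=
    fun n => StrongDual.toWeakDual (InnerProductSpace.toDual ℝ E (x n))
  obtain ⟨a, -, ha⟩ := hc.ultrafilter_le_nhds (U.map ψ) (by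
    rw [Ultrafilter.coe_map, le_principal_iff, mem_map]
    filter_upwards [hx] with n hn
    simpa [ψ] using hn)
  refine ⟨(InnerProductSpace.toDual ℝ E).symm (WeakDual.toStrongDual a), fun z => ?_⟩
  have h2 : Tendsto ψ U (nhds a) := ha
  have h3 := ((WeakDual.eval_continuous z).tendsto a).comp h2
  rw [real_inner_comm]
  simp only [InnerProductSpace.toDual_symm_apply]
  refine h3.congr fun n => ?_
  simp [ψ, real_inner_comm]

/-- Explicit Euler scheme with step `h` for `X' = G X`. -/
def euler (G : E → E) (x0 : E) (h : ℝ) : ℕ → E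
  | 0 => x0
  | i + 1 => euler G x0 h i + h • G (euler G x0 h i)

lemma euler_norm_le {G : E → E} {C : ℝ} (hC : 0 ≤ C)
    (hG : ∀ x, ‖x‖ ≤ 1 → ‖G x‖ ≤ C * ‖x‖) {x0 : E} {T : ℝ}
    (hx0 : ‖x0‖ * Real.exp (C * T) ≤ 1) {h : ℝ} (hh : 0 ≤ h) (i : ℕ) (hi : h * i ≤ T) :
    ‖euler G x0 h i‖ ≤ ‖x0‖ * Real.exp (C * (h * i)) := by
  induction i with
  | zero => simp [euler]
  | succ i ih =>
    push_cast at hi ⊢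
    have h1 := ih (by nlinarith)
    have h2 : ‖euler G x0 h i‖ ≤ 1 := by
      refine h1.trans (le_trans ?_ hx0)
      gcongr
      nlinarith
    calc ‖euler G x0 h i + h • G (euler G x0 h i)‖
        ≤ ‖euler G x0 h i‖ + h * (C * ‖euler G x0 h i‖) := by
          refine (norm_add_le _ _).trans ?_
          rw [norm_smul, Real.norm_of_nonneg hh]
          gcongr
          exact hG _ h2
      _ = ‖euler G x0 h i‖ * (C * h + 1) := by ring
      _ ≤ (‖x0‖ * Real.exp (C * (h * i))) * Real.exp (C * h) := by
          gcongr
          exact Real.add_one_le_exp _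
      _ = _ := by rw [mul_assoc, ← Real.exp_add]; ring_nf

/-- If `G` stays `η`-close to `z` along the Euler polygon between two indices, then the increment
of the polygon is `η`-close to the linear one with slope `z`. -/
lemma euler_increment (G : E → E) (x0 : E) {h : ℝ} (hh : 0 ≤ h) (i p : ℕ) (z : E) (η : ℝ)
    (hz : ∀ l, i ≤ l → l < i + p → ‖G (euler G x0 h l) - z‖ ≤ η) :
    ‖euler G x0 h (i + p) - euler G x0 h i - (h * p) • z‖ ≤ h * p * η := by
  induction p with
  | zero => simp
  | succ p ih =>
    have h1 := ih fun l hl hl' => hz l hl (by omega)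
    have h2 := hz (i + p) (by omega) (by omega)
    have h3 : euler G x0 h (i + (p + 1)) - euler G x0 h i - (h * (p + 1 : ℕ)) • z
        = (euler G x0 h (i + p) - euler G x0 h i - (h * p) • z)
          + h • (G (euler G x0 h (i + p)) - z) := by
      rw [← add_assoc, euler]
      push_cast
      module
    rw [h3]
    refine (norm_add_le _ _).trans ?_
    rw [norm_smul, Real.norm_of_nonneg hh]
    push_cast
    nlinarith [mul_le_mul_of_nonneg_left h2 hh]

/-- Peano existence: a vector field `G` on a Hilbert space which on the unit ball has linear growth,
is uniformly continuous in norm and has weakly closed graph, admits a norm-differentiable integral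
curve for as long as the Grönwall bound keeps the solution in the unit ball. -/
theorem peano_weak [CompleteSpace E] {G : E → E} {C : ℝ} (hC : 0 ≤ C)
    (hG : ∀ x, ‖x‖ ≤ 1 → ‖G x‖ ≤ C * ‖x‖)
    (huc : ∀ η > 0, ∃ ρ > 0, ∀ x y, ‖x‖ ≤ 1 → ‖y‖ ≤ 1 → ‖x - y‖ < ρ → ‖G x - G y‖ ≤ η)
    (hcl : ∀ (U : Ultrafilter ℕ) (x : ℕ → E) (y z : E), (∀ᶠ n in (U : Filter ℕ), ‖x n‖ ≤ 1) →
      ‖y‖ ≤ 1 → WeakLim (U : Filter ℕ) x y → WeakLim (U : Filter ℕ) (fun n => G (x n)) z → z = G y)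
    {x0 : E} {T : ℝ} (hT : 0 < T) (hx0 : ‖x0‖ * Real.exp (C * T) ≤ 1) :
    ∃ X : ℝ → E, X 0 = x0 ∧
      ∀ t ∈ Set.Icc 0 T, ‖X t‖ ≤ 1 ∧ HasDerivWithinAt X (G (X t)) (Set.Icc 0 T) t := by
  let U : Ultrafilter ℕ := hyperfilter ℕ
  let h : ℕ → ℝ := fun n => T / (n + 1)
  have hpos : ∀ n, 0 < h n := fun n => by positivity
  have hlim : Tendsto h U (nhds 0) :=
    (tendsto_const_div_atTop_nhds_zero_nat T |>.comp (tendsto_add_atTop_nat 1)).congr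
      (fun n => by simp [h]) |>.mono_left Nat.hyperfilter_le_atTop
  let I : ℕ → ℝ → ℕ := fun n t => ⌊t / h n⌋₊
  have hI1 : ∀ n t, 0 ≤ t → h n * I n t ≤ t := fun n t ht => by
    have := Nat.floor_le (div_nonneg ht (hpos n).le)
    rw [le_div_iff₀ (hpos n)] at this
    linarith
  have hI2 : ∀ n t, t - h n ≤ h n * I n t := fun n t => by
    have := (Nat.lt_floor_add_one (t / h n)).le
    rw [div_le_iff₀ (hpos n)] at this
    linarith
  have hImono : ∀ n s t, s ≤ t → I n s ≤ I n t := fun n s t hst =>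
    Nat.floor_mono (by have := (hpos n).le; gcongr)
  let Y : ℕ → ℕ → E := fun n => euler G x0 (h n)
  have hYb : ∀ (n i : ℕ), h n * i ≤ T → ‖Y n i‖ ≤ 1 := fun n i hi =>
    (euler_norm_le hC hG hx0 (hpos n).le i hi).trans (le_trans (by gcongr) hx0)
  have hYT : ∀ n i t, t ∈ Set.Icc 0 T → i ≤ I n t → ‖Y n i‖ ≤ 1 := fun n i t ht hi => by
    refine hYb n i (le_trans ?_ ((hI1 n t ht.1).trans ht.2))
    have := (hpos n).le
    gcongr
  have hGC : ∀ x, ‖x‖ ≤ 1 → ‖G x‖ ≤ C := fun x hx => (hG x hx).trans (by nlinarith)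
  have hex : ∀ t, ∃ y, t ∈ Set.Icc 0 T → WeakLim (U : Filter ℕ) (fun n => Y n (I n t)) y := by
    intro t
    by_cases ht : t ∈ Set.Icc 0 T
    · obtain ⟨y, hy⟩ := exists_weakLim U (fun n => Y n (I n t)) 1
        (Eventually.of_forall fun n => hYT n _ t ht le_rfl)
      exact ⟨y, fun _ => hy⟩
    · exact ⟨0, fun h => absurd h ht⟩
  choose X hX using hex
  have hX1 : ∀ t ∈ Set.Icc 0 T, ‖X t‖ ≤ 1 := fun t ht =>
    (hX t ht).norm_le tendsto_const_nhds (Eventually.of_forall fun n => hYT n _ t ht le_rfl)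
  have hGX : ∀ t ∈ Set.Icc 0 T, WeakLim (U : Filter ℕ) (fun n => G (Y n (I n t))) (G (X t)) := by
    intro t ht
    obtain ⟨z, hz⟩ := exists_weakLim U (fun n => G (Y n (I n t))) C
      (Eventually.of_forall fun n => hGC _ (hYT n _ t ht le_rfl))
    rwa [← hcl U _ (X t) z (Eventually.of_forall fun n => hYT n _ t ht le_rfl) (hX1 t ht)
      (hX t ht) hz]
  -- the increment estimate for the polygons, passed to the weak limit
  have key : ∀ η > 0, ∃ ρ > 0, ∀ s t r, s ∈ Set.Icc 0 T → t ∈ Set.Icc 0 T → s ≤ r → r ≤ t →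
      t - s < ρ → ‖X t - X s - (t - s) • G (X r)‖ ≤ (t - s) * η := by
    intro η hη
    obtain ⟨ρ, hρ, hρ'⟩ := huc η hη
    refine ⟨ρ / (C + 1), by positivity, fun s t r hs ht hsr hrt hst => ?_⟩
    have hr : r ∈ Set.Icc 0 T := ⟨hs.1.trans hsr, hrt.trans ht.2⟩
    rw [lt_div_iff₀ (by positivity)] at hst
    have hlen : Tendsto (fun n => h n * ((I n t - I n s : ℕ) : ℝ)) U (nhds (t - s)) := by
      have e1 : Tendsto (fun n => t - s - h n) U (nhds (t - s)) := by
        simpa using tendsto_const_nhds.sub hlim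
      have e2 : Tendsto (fun n => t - s + h n) U (nhds (t - s)) := by
        simpa using tendsto_const_nhds.add hlim
      refine tendsto_of_tendsto_of_tendsto_of_le_of_le e1 e2 (fun n => ?_) (fun n => ?_) <;>
      · simp only
        rw [Nat.cast_sub (hImono n s t (hsr.trans hrt)), mul_sub]
        linarith [hI1 n t ht.1, hI2 n t, hI1 n s hs.1, hI2 n s]
    have hsmall : ∀ᶠ n in (U : Filter ℕ), (t - s + h n) * (C + 1) < ρ := by
      have : Tendsto (fun n => (t - s + h n) * (C + 1)) U (nhds ((t - s + 0) * (C + 1))) :=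
        (tendsto_const_nhds.add hlim).mul_const _
      exact this.eventually_lt_const (by simpa using hst)
    refine (((hX t ht).sub (hX s hs)).sub (WeakLim.smul hlen (hGX r hr))).norm_le
      (hlen.mul_const η) ?_
    filter_upwards [hsmall] with n hn
    have hi := hImono n s r hsr
    have hj := hImono n r t hrt
    have hsub : h n * ((I n t - I n s : ℕ) : ℝ) ≤ t - s + h n := by
      rw [Nat.cast_sub (hi.trans hj), mul_sub]
      linarith [hI1 n t ht.1, hI2 n s]
    -- the polygon is `C`-Lipschitz, so it stays `ρ`-close to its value at time `r`
    have hlip : ∀ a p, a + p ≤ I n t → ‖Y n (a + p) - Y n a‖ ≤ h n * p * C := by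
      intro a p hap
      have := euler_increment G x0 (hpos n).le a p 0 C (fun l _ hl => by
        rw [sub_zero]; exact hGC _ (hYT n l t ht (by omega)))
      simpa using this
    have hclose : ∀ l, I n s ≤ l → l < I n s + (I n t - I n s) →
        ‖G (Y n l) - G (Y n (I n r))‖ ≤ η := by
      intro l hl hl'
      refine hρ' _ _ (hYT n l t ht (by omega)) (hYT n _ r hr le_rfl) ?_
      have hbd : ∀ p : ℕ, p ≤ I n t - I n s → h n * p * C < ρ := by
        intro p hp
        have h1 : h n * (p : ℝ) ≤ t - s + h n := le_trans (by
          have := (hpos n).le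
          gcongr) hsub
        have h2 : 0 ≤ h n * (p : ℝ) := by have := (hpos n).le; positivity
        nlinarith
      rcases le_total l (I n r) with hlr | hlr
      · obtain ⟨p, hp⟩ := Nat.exists_eq_add_of_le hlr
        rw [norm_sub_rev, hp]
        exact (hlip l p (by omega)).trans_lt (hbd p (by omega))
      · obtain ⟨p, hp⟩ := Nat.exists_eq_add_of_le hlr
        rw [hp]
        exact (hlip _ p (by omega)).trans_lt (hbd p (by omega))
    have := euler_increment G x0 (hpos n).le (I n s) (I n t - I n s) (G (Y n (I n r))) η hclose
    rwa [Nat.add_sub_cancel' (hi.trans hj)] at this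
  refine ⟨X, ?_, fun t ht => ⟨hX1 t ht, ?_⟩⟩
  · have h0 := hX 0 ⟨le_rfl, hT.le⟩
    have h1 : ∀ n, Y n (I n 0) = x0 := fun n => by simp [I, Y, euler]
    simp only [h1] at h0
    exact ext_inner_left ℝ fun z => tendsto_nhds_unique (h0 z) tendsto_const_nhds
  · rw [hasDerivWithinAt_iff_isLittleO, Asymptotics.isLittleO_iff]
    intro η hη
    obtain ⟨ρ, hρ, hk⟩ := key η hη
    filter_upwards [self_mem_nhdsWithin, mem_nhdsWithin_of_mem_nhds (Metric.ball_mem_nhds t hρ)]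
      with s hs hst
    rw [Metric.mem_ball, Real.dist_eq, abs_lt] at hst
    rcases le_total s t with hle | hle
    · have := hk s t t hs ht hle le_rfl (by linarith)
      rw [Real.norm_of_nonpos (by linarith : s - t ≤ 0)]
      rw [show X s - X t - (s - t) • G (X t) = -(X t - X s - (t - s) • G (X t)) by module,
        norm_neg]
      linarith
    · have := hk t s t ht hs le_rfl hle (by linarith)
      rw [Real.norm_of_nonneg (by linarith : 0 ≤ s - t)]
      linarith

end Peano

/-! ### The discrete derivative as a bounded operator on weighted `ℓ²` -/

section Operators

/-- The Hilbert space `ℓ²(ℤ^d; ℂ)`. -/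
abbrev L2 (d : ℕ) := lp (fun _ : Fin d → ℤ => ℂ) 2

/-- The consecutive differences of `a ↦ 1/(2a+1)` sum to zero over `ℤ`. -/
lemma hasSum_odd_step :
    HasSum (fun a : ℤ => (1 / (2 * a + 1) - 1 / (2 * (a + 1) + 1) : ℝ)) 0 := by
  have hpos : HasSum (fun n : ℕ => (1 / (2 * (n : ℝ) + 1) - 1 / (2 * ((n : ℝ) + 1) + 1) : ℝ)) 1 := by
    rw [hasSum_iff_tendsto_nat_of_nonneg]
    · have h1 : ∀ N : ℕ, ∑ n ∈ Finset.range N,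
          (1 / (2 * (n : ℝ) + 1) - 1 / (2 * ((n : ℝ) + 1) + 1) : ℝ) = 1 - 1 / (2 * N + 1) := by
        intro N
        induction N with
        | zero => simp
        | succ N ih => rw [Finset.sum_range_succ, ih]; push_cast; ring
      simp only [h1]
      have h2 : Tendsto (fun N : ℕ => (1 / (2 * N + 1) : ℝ)) atTop (nhds 0) := by
        refine Tendsto.const_div_atTop ?_ _
        exact tendsto_atTop_add_const_right _ _
          (tendsto_natCast_atTop_atTop.const_mul_atTop (by norm_num))
      simpa using tendsto_const_nhds.sub h2
    · intro n
      rw [sub_nonneg]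
      gcongr
      linarith
  have hneg : HasSum (fun n : ℕ => (1 / (2 * ((-((n : ℤ) + 1) : ℤ) : ℝ) + 1)
      - 1 / (2 * (((-((n : ℤ) + 1) : ℤ) : ℝ) + 1) + 1) : ℝ)) (-2 + 1) := by
    convert HasSum.zero_add (f := fun n : ℕ => (1 / (2 * ((-((n : ℤ) + 1) : ℤ) : ℝ) + 1)
      - 1 / (2 * (((-((n : ℤ) + 1) : ℤ) : ℝ) + 1) + 1) : ℝ)) (m := 1) ?_ using 1
    · norm_num
    · refine hpos.congr_fun ?_
      intro n
      have h1 : (2 * (n : ℝ) + 1) ≠ 0 := by positivity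
      have h2 : (2 * ((n : ℝ) + 1) + 1) ≠ 0 := by positivity
      push_cast
      rw [show (2 * (-((n : ℝ) + 1 + 1)) + 1) = -(2 * ((n : ℝ) + 1) + 1) by ring,
        show (2 * (-((n : ℝ) + 1 + 1) + 1) + 1) = -(2 * (n : ℝ) + 1) by ring]
      field_simp
      ring
  have := HasSum.of_nat_of_neg_add_one
    (f := fun a : ℤ => (1 / (2 * a + 1) - 1 / (2 * (a + 1) + 1) : ℝ)) (m := 1) (m' := -2 + 1)
    (by simpa using hpos) (by simpa using hneg)
  norm_num at this
  simpa using this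

lemma hasSum_odd_diff (p : ℕ) :
    HasSum (fun a : ℤ => (1 / (2 * a + 1) - 1 / (2 * (a + p) + 1) : ℝ)) 0 := by
  induction p with
  | zero => simp
  | succ p ih =>
    have h1 := ((Equiv.addRight (p : ℤ)).hasSum_iff (a := (0 : ℝ))).2 hasSum_odd_step
    have h2 := ih.add h1
    simp only [add_zero] at h2
    refine h2.congr_fun fun a => ?_
    simp only [Function.comp_apply, Equiv.coe_addRight]
    push_cast
    ring

lemma two_mul_add_one_ne_zero (a : ℤ) : (2 * (a : ℝ) + 1) ≠ 0 := by
  have : (2 * a + 1 : ℤ) ≠ 0 := by omega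
  exact_mod_cast this

/-- Distinct translates of `a ↦ 1/(2a+1)` are orthogonal in `ℓ²(ℤ)`. -/
lemma hasSum_odd_cross {p q : ℤ} (hpq : p ≠ q) :
    HasSum (fun a : ℤ => (1 / (2 * ((a : ℝ) - p) + 1) * (1 / (2 * ((a : ℝ) - q) + 1)) : ℝ)) 0 := by
  wlog h : q < p generalizing p q
  · refine (this hpq.symm (by omega)).congr_fun fun a => ?_
    rw [mul_comm]
  obtain ⟨r, hr⟩ := Int.eq_ofNat_of_zero_le (sub_nonneg.2 h.le)
  have hr0 : (r : ℝ) ≠ 0 := by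
    have : r ≠ 0 := by omega
    exact_mod_cast this
  have h1 := (((Equiv.subRight p).hasSum_iff (a := (0 : ℝ))).2 (hasSum_odd_diff r)).mul_left
    (1 / (2 * r : ℝ))
  rw [mul_zero] at h1
  refine h1.congr_fun fun a => ?_
  have e1 := two_mul_add_one_ne_zero (a - p)
  have e2 := two_mul_add_one_ne_zero (a - q)
  have hq : (q : ℝ) = p - r := by
    have : q = p - r := by omega
    exact_mod_cast this
  simp only [Function.comp_apply, Equiv.subRight_apply]
  push_cast at e1 e2 ⊢
  rw [show ((a : ℝ) - p + r) = a - q by rw [hq]; ring]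
  field_simp
  rw [hq]
  ring

lemma summable_odd_sq : Summable (fun a : ℤ => ((1 / (2 * (a : ℝ) + 1)) ^ 2 : ℝ)) := by
  have h := ((Real.summable_one_div_int_add_rpow (1 / 2) 2).2 (by norm_num)).mul_left (1 / 4)
  refine h.congr fun a => ?_
  have e1 := two_mul_add_one_ne_zero a
  have e2 : (a : ℝ) + 1 / 2 ≠ 0 := fun h0 => e1 (by linarith)
  rw [Real.rpow_two, sq_abs]
  field_simp
  ring

/-- The squared `ℓ²` norm of `a ↦ 1/(2a+1)` (its value is `π²/4`, but only positivity matters). -/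
def oddSq : ℝ := ∑' a : ℤ, (1 / (2 * (a : ℝ) + 1)) ^ 2

lemma oddSq_pos : 0 < oddSq :=
  summable_odd_sq.tsum_pos (fun _ => sq_nonneg _) 0 (by norm_num)

/-- The translate to `m` of the kernel `1/(2a+1)` along the `j`-th axis. -/
def lineFun {d : ℕ} (j : Fin d) (m x : Fin d → ℤ) : ℝ :=
  if ∀ i, i ≠ j → x i = m i then 1 / (2 * ((x j : ℝ) - m j) + 1) else 0

lemma lineFun_hasSum {d : ℕ} (j : Fin d) (m n : Fin d → ℤ) :
    HasSum (fun x => lineFun j m x * lineFun j n x) (if m = n then oddSq else 0) := by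
  by_cases hl : ∀ i, i ≠ j → m i = n i
  · rw [← (Function.update_injective m j).hasSum_iff]
    · have hu : ∀ a : ℤ, ∀ i, i ≠ j → Function.update m j a i = n i := fun a i hi => by
        rw [Function.update_of_ne hi, hl i hi]
      have hu' : ∀ a : ℤ, ∀ i, i ≠ j → Function.update m j a i = m i := fun a i hi => by
        rw [Function.update_of_ne hi]
      have he : (fun x => lineFun j m x * lineFun j n x) ∘ Function.update m j = fun a : ℤ =>
          (1 / (2 * ((a : ℝ) - m j) + 1) * (1 / (2 * ((a : ℝ) - n j) + 1)) : ℝ) := by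
        funext a
        simp only [Function.comp_apply, lineFun, if_pos (hu a), if_pos (hu' a),
          Function.update_self]
      rw [he]
      split_ifs with hmn
      · subst hmn
        have := ((Equiv.subRight (m j)).hasSum_iff (a := oddSq)).2 summable_odd_sq.hasSum
        refine this.congr_fun fun a => ?_
        simp only [Function.comp_apply, Equiv.subRight_apply]
        push_cast
        ring
      · refine hasSum_odd_cross fun h => hmn ?_
        funext i
        by_cases hi : i = j
        · rw [hi, h]
        · exact hl i hi
    · intro x hx
      have : ¬ ∀ i, i ≠ j → x i = m i := fun h => hx ⟨x j, by
        funext i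
        by_cases hi : i = j
        · subst hi; simp
        · rw [Function.update_of_ne hi, h i hi]⟩
      simp [lineFun, this]
  · have hmn : m ≠ n := fun h => hl fun i _ => by rw [h]
    rw [if_neg hmn]
    convert (hasSum_zero : HasSum (fun _ : Fin d → ℤ => (0 : ℝ)) 0) using 1
    funext x
    by_cases h1 : ∀ i, i ≠ j → x i = m i
    · have h2 : ¬ ∀ i, i ≠ j → x i = n i := fun h2 => hl fun i hi => by rw [← h1 i hi, h2 i hi]
      simp [lineFun, h2]
    · simp [lineFun, h1]

/-- The translate `lineFun j m`, normalised, as a vector of `ℓ²(ℤ^d)`. -/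
def lineVec {d : ℕ} (j : Fin d) (m : Fin d → ℤ) : L2 d :=
  ⟨fun x => (((Real.sqrt oddSq)⁻¹ * lineFun j m x : ℝ) : ℂ), by
    refine memℓp_gen ?_
    have h := ((lineFun_hasSum j m m).summable).mul_left ((Real.sqrt oddSq)⁻¹ ^ 2)
    refine h.congr fun x => ?_
    simp only [Complex.norm_real, ENNReal.toReal_ofNat, Real.rpow_two, Real.norm_eq_abs, sq_abs]
    ring⟩

lemma lineVec_apply {d : ℕ} (j : Fin d) (m x : Fin d → ℤ) :
    lineVec j m x = (((Real.sqrt oddSq)⁻¹ * lineFun j m x : ℝ) : ℂ) := rfl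

lemma lineVec_orthonormal {d : ℕ} (j : Fin d) : Orthonormal ℂ (lineVec j) := by
  classical
  rw [orthonormal_iff_ite]
  intro m n
  refine (lp.hasSum_inner (𝕜 := ℂ) (lineVec j m) (lineVec j n)).unique ?_
  have h := ((lineFun_hasSum j m n).mul_left ((Real.sqrt oddSq)⁻¹ ^ 2))
  have h' := Complex.hasSum_ofReal.2 h
  convert! h' using 1
  · funext x
    simp only [lineVec_apply, RCLike.inner_apply, Complex.conj_ofReal]
    push_cast
    ring
  · split_ifs
    · rw [inv_pow, Real.sq_sqrt oddSq_pos.le, inv_mul_cancel₀ oddSq_pos.ne']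
      simp
    · simp

/-- Convolution along an axis with (a translate of) `1/(2a+1)`, the discrete Hilbert transform,
is bounded on `ℓ²(ℤ^d)`: it is a multiple of the isometry attached to an orthonormal family. -/
lemma exists_hilbert {d : ℕ} (j : Fin d) (σ : (Fin d → ℤ) → (Fin d → ℤ))
    (hσ : Function.Injective σ) :
    ∃ A : L2 d →L[ℂ] L2 d, ∀ U x,
      HasSum (fun m => U m * ((lineFun j (σ m) x : ℝ) : ℂ)) (A U x) := by
  have hV := ((lineVec_orthonormal j).comp σ hσ).orthogonalFamily
  refine ⟨((Real.sqrt oddSq : ℝ) : ℂ) • hV.linearIsometry.toContinuousLinearMap, fun U x => ?_⟩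
  have h1 := (hV.hasSum_linearIsometry U).mapL (lp.evalCLM ℂ (fun _ : Fin d → ℤ => ℂ) 2 x)
  have h2 := h1.mul_left ((Real.sqrt oddSq : ℝ) : ℂ)
  convert! h2 using 1
  funext m
  have hne : ((Real.sqrt oddSq : ℝ) : ℂ) ≠ 0 := by
    exact_mod_cast (Real.sqrt_pos.2 oddSq_pos).ne'
  change _ = _ * ((U m • lineVec j (σ m) : L2 d) x)
  rw [lp.coeFn_smul, Pi.smul_apply, lineVec_apply, smul_eq_mul]
  push_cast
  field_simp

/-- Multiplication by a function bounded by one. -/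
lemma exists_mulOp {d : ℕ} (q : (Fin d → ℤ) → ℂ) (hq : ∀ x, ‖q x‖ ≤ 1) :
    ∃ M : L2 d →L[ℂ] L2 d, ∀ U x, M U x = q x * U x := by
  refine ⟨lp.mapCLM 2 (fun x => q x • ContinuousLinearMap.id ℂ ℂ) zero_le_one
    (fun x => (norm_smul_le _ _).trans (by simpa using hq x)), fun U x => ?_⟩
  simp

lemma odd_frac_sub {a : ℂ} (h1 : 2 * a + 1 ≠ 0) (h2 : 2 * a - 1 ≠ 0) :
    1 / (2 * a - 1) - 1 / (2 * a + 1) = 2 / (4 * a ^ 2 - 1) := by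
  rw [show 4 * a ^ 2 - 1 = (2 * a - 1) * (2 * a + 1) by ring]
  field_simp
  ring

lemma odd_frac_add {a : ℂ} (h1 : 2 * a + 1 ≠ 0) (h2 : 2 * a - 1 ≠ 0) :
    1 / (2 * a - 1) + 1 / (2 * a + 1) = 4 * a / (4 * a ^ 2 - 1) := by
  rw [show 4 * a ^ 2 - 1 = (2 * a - 1) * (2 * a + 1) by ring]
  field_simp
  ring

/-- On `ℓ²`, the derivative `∂ⱼ` and the commutator `[xⱼ, ∂ⱼ]` are both bounded, being combinations
of two discrete Hilbert transforms. -/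
lemma exists_pd_ops {d : ℕ} (j : Fin d) :
    ∃ P Q : L2 d →L[ℂ] L2 d,
      (∀ U x, HasSum (fun m => U m * phi d j (x - m)) (P U x)) ∧
      (∀ U x, HasSum (fun m => U m * (((x j : ℂ) - m j) * phi d j (x - m))) (Q U x)) := by
  obtain ⟨A, hA⟩ := exists_hilbert j id Function.injective_id
  obtain ⟨B, hB⟩ := exists_hilbert j (fun m => m + Pi.single j 1) (add_left_injective _)
  let c : ℂ := -4 * Complex.I / Real.pi
  have hline : ∀ m x : Fin d → ℤ,
      (∀ i, i ≠ j → x i = (m + Pi.single j 1 : Fin d → ℤ) i) ↔ ∀ i, i ≠ j → x i = m i := by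
    intro m x
    refine forall_congr' fun i => forall_congr' fun hi => ?_
    simp [hi]
  have hline' : ∀ m x : Fin d → ℤ, (∀ i, i ≠ j → (x - m) i = 0) ↔ ∀ i, i ≠ j → x i = m i := by
    intro m x
    refine forall_congr' fun i => forall_congr' fun hi => ?_
    simp [sub_eq_zero]
  refine ⟨(c / 2) • (B - A), (c / 4) • (B + A), fun U x => ?_, fun U x => ?_⟩
  · have h := ((hB U x).sub (hA U x)).mul_left (c / 2)
    refine h.congr_fun fun m => ?_
    simp only [lineFun, phi, hline, hline', id]
    split_ifs
    · have e1 : (2 * ((x j : ℂ) - m j) + 1) ≠ 0 := by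
        exact_mod_cast two_mul_add_one_ne_zero (x j - m j)
      have e2 : (2 * ((x j : ℂ) - m j) - 1) ≠ 0 := by
        have := two_mul_add_one_ne_zero (x j - (m j + 1))
        rw [show 2 * ((x j : ℂ) - m j) - 1 = 2 * ((x j : ℂ) - (m j + 1)) + 1 by ring]
        exact_mod_cast this
      simp only [Pi.sub_apply, Pi.add_apply, Pi.single_eq_same]
      push_cast
      rw [show 2 * ((x j : ℂ) - (m j + 1)) + 1 = 2 * ((x j : ℂ) - m j) - 1 by ring]
      generalize (x j : ℂ) - m j = a at e1 e2 ⊢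
      rw [show c / 2 * (U m * (1 / (2 * a - 1)) - U m * (1 / (2 * a + 1)))
        = U m * (c / 2 * (1 / (2 * a - 1) - 1 / (2 * a + 1))) by ring, odd_frac_sub e1 e2]
      simp only [c, div_eq_mul_inv, mul_inv]
      ring
    · simp
  · have h := ((hB U x).add (hA U x)).mul_left (c / 4)
    refine h.congr_fun fun m => ?_
    simp only [lineFun, phi, hline, hline', id]
    split_ifs
    · have e1 : (2 * ((x j : ℂ) - m j) + 1) ≠ 0 := by
        exact_mod_cast two_mul_add_one_ne_zero (x j - m j)
      have e2 : (2 * ((x j : ℂ) - m j) - 1) ≠ 0 := by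
        have := two_mul_add_one_ne_zero (x j - (m j + 1))
        rw [show 2 * ((x j : ℂ) - m j) - 1 = 2 * ((x j : ℂ) - (m j + 1)) + 1 by ring]
        exact_mod_cast this
      simp only [Pi.sub_apply, Pi.add_apply, Pi.single_eq_same]
      push_cast
      rw [show 2 * ((x j : ℂ) - (m j + 1)) + 1 = 2 * ((x j : ℂ) - m j) - 1 by ring]
      generalize (x j : ℂ) - m j = a at e1 e2 ⊢
      rw [show c / 4 * (U m * (1 / (2 * a - 1)) + U m * (1 / (2 * a + 1)))
        = U m * (c / 4 * (1 / (2 * a - 1) + 1 / (2 * a + 1))) by ring, odd_frac_add e1 e2]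
      simp only [c, div_eq_mul_inv, mul_inv]
      ring
    · simp

lemma jap_sq {d : ℕ} (m : Fin d → ℤ) : jap m ^ 2 = 1 + ∑ i, ((m i : ℝ)) ^ 2 :=
  Real.sq_sqrt (by positivity)

lemma one_le_jap {d : ℕ} (m : Fin d → ℤ) : 1 ≤ jap m :=
  Real.one_le_sqrt.2 (le_add_of_nonneg_right (by positivity))

lemma jap_pos {d : ℕ} (m : Fin d → ℤ) : 0 < jap m := one_pos.trans_le (one_le_jap m)

lemma abs_le_jap {d : ℕ} (m : Fin d → ℤ) (i : Fin d) : |(m i : ℝ)| ≤ jap m := by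
  refine Real.abs_le_sqrt ?_
  have := Finset.single_le_sum (f := fun i => ((m i : ℝ)) ^ 2) (fun _ _ => sq_nonneg _)
    (Finset.mem_univ i)
  linarith

/-- The weight `⟨m⟩^k`. -/
def wt {d : ℕ} (k : ℕ) (m : Fin d → ℤ) : ℝ := jap m ^ k

lemma one_le_wt {d : ℕ} (k : ℕ) (m : Fin d → ℤ) : 1 ≤ wt k m := one_le_pow₀ (one_le_jap m)

lemma wt_pos {d : ℕ} (k : ℕ) (m : Fin d → ℤ) : 0 < wt k m := pow_pos (jap_pos m) k

/-- `∂ⱼ` is bounded on `ℓ^{2,k}`, `k ≤ 1`: conjugated by the weight it is a bounded operator `D` of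
`ℓ²`. For `k = 1` write `⟨x⟩ = ⟨x⟩⁻¹(1 + ∑ xᵢ²)` and commute one factor `xᵢ` through `∂ⱼ`. -/
lemma exists_weighted_pd {d : ℕ} (k : ℕ) (hk : k = 0 ∨ k = 1) (j : Fin d) :
    ∃ D : L2 d →L[ℝ] L2 d, ∀ U x,
      pd j (fun m => ((wt k m : ℝ) : ℂ)⁻¹ * U m) x = ((wt k x : ℝ) : ℂ)⁻¹ * D U x := by
  obtain ⟨P, Q, hP, hQ⟩ := exists_pd_ops j
  rcases hk with rfl | rfl
  · refine ⟨P.restrictScalars ℝ, fun U x => ?_⟩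
    simpa [wt, pd, dconv] using (hP U x).tsum_eq
  · have hw : ∀ x : Fin d → ℤ, (jap x : ℂ) ≠ 0 := fun x => by exact_mod_cast (jap_pos x).ne'
    obtain ⟨M, hM⟩ := exists_mulOp (d := d) (fun x => (jap x : ℂ)⁻¹) (fun x => by
      rw [norm_inv, Complex.norm_real, Real.norm_of_nonneg (jap_pos x).le]
      exact inv_le_one_of_one_le₀ (one_le_jap x))
    have hN : ∀ i, ∃ N : L2 d →L[ℂ] L2 d, ∀ U x, N U x = ((x i : ℂ) * (jap x : ℂ)⁻¹) * U x :=
      fun i => exists_mulOp _ (fun x => by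
        rw [norm_mul, norm_inv, Complex.norm_real, Real.norm_of_nonneg (jap_pos x).le,
          Complex.norm_intCast, ← div_eq_mul_inv]
        exact div_le_one_of_le₀ (abs_le_jap x i) (jap_pos x).le)
    choose N hN using hN
    refine ⟨(M ∘L P ∘L M + ∑ i, N i ∘L P ∘L N i + N j ∘L Q ∘L M).restrictScalars ℝ,
      fun U x => ?_⟩
    have h0 := hP (M U) x
    have h1 := fun i => hP (N i U) x
    have h2 := hQ (M U) x
    -- commuting `xᵢ` through the convolution
    have hcomm : ∀ i, (x i : ℂ) * P (M U) x = P (N i U) x + if i = j then Q (M U) x else 0 := by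
      intro i
      by_cases hij : i = j
      · subst hij
        rw [if_pos rfl]
        refine (h0.mul_left _).unique (((h1 i).add h2).congr_fun fun m => ?_)
        rw [hM, hN]
        ring
      · rw [if_neg hij, add_zero]
        refine (h0.mul_left _).unique ((h1 i).congr_fun fun m => ?_)
        rw [hM, hN]
        by_cases hl : ∀ i, i ≠ j → (x - m) i = 0
        · have : x i = m i := by simpa [sub_eq_zero] using hl i hij
          rw [this]
          ring
        · rw [phi, if_neg hl]
          simp
    have hD : ((M ∘L P ∘L M + ∑ i, N i ∘L P ∘L N i + N j ∘L Q ∘L M) U : L2 d) x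
        = (jap x : ℂ)⁻¹ * ((1 + ∑ i, (x i : ℂ) ^ 2) * P (M U) x) := by
      have e1 : ((M ∘L P ∘L M + ∑ i, N i ∘L P ∘L N i + N j ∘L Q ∘L M) U : L2 d) x
        = M (P (M U)) x + ∑ i, N i (P (N i U)) x + N j (Q (M U)) x := by
        simp only [add_apply, sum_apply,
          ContinuousLinearMap.comp_apply, lp.coeFn_add, lp.coeFn_sum, Pi.add_apply,
          Finset.sum_apply]
      rw [e1, hM, hN]
      have e2 : ∑ i, N i (P (N i U)) x
          = (jap x : ℂ)⁻¹ * ∑ i, (x i : ℂ) * ((x i : ℂ) * P (M U) x)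
            - (jap x : ℂ)⁻¹ * ((x j : ℂ) * Q (M U) x) := by
        simp only [hcomm, hN, mul_add, Finset.sum_add_distrib, mul_ite, mul_zero,
          Finset.sum_ite_eq', Finset.mem_univ, if_true, Finset.mul_sum]
        rw [add_sub_cancel_right]
        exact Finset.sum_congr rfl fun i _ => by ring
      rw [e2, add_mul, Finset.sum_mul, one_mul]
      simp only [pow_two, mul_assoc]
      ring
    have hsq : (1 + ∑ i, (x i : ℂ) ^ 2) = (jap x : ℂ) ^ 2 := by
      have := jap_sq x
      exact_mod_cast this.symm
    rw [ContinuousLinearMap.coe_restrictScalars', hD, hsq]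
    have h3 : pd j (fun m => ((wt 1 m : ℝ) : ℂ)⁻¹ * U m) x = P (M U) x := by
      rw [← h0.tsum_eq]
      simp [pd, dconv, wt, hM]
    rw [h3, wt, pow_one]
    field_simp [hw x]

end Operators

/-! ### The nonlinearity as a map of the phase space -/

section Nonlinearity

variable {d : ℕ}

/-- `Dom h c`: the function `h` is bounded above by an element of real `ℓ²` of norm at most `c`. -/
def Dom (h : (Fin d → ℤ) → ℝ) (c : ℝ) : Prop :=
  ∃ G : lp (fun _ : Fin d → ℤ => ℝ) 2, (∀ x, h x ≤ G x) ∧ ‖G‖ ≤ c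

lemma Dom.of (f : L2 d) {c : ℝ} (hc : ‖f‖ ≤ c) : Dom (fun x => ‖f x‖) c :=
  ⟨lp.toNorm f, fun _ => le_rfl, by rwa [lp.norm_toNorm]⟩

lemma Dom.add {h h' : (Fin d → ℤ) → ℝ} {c c' : ℝ} (H : Dom h c) (H' : Dom h' c') :
    Dom (fun x => h x + h' x) (c + c') := by
  obtain ⟨G, h1, h2⟩ := H
  obtain ⟨G', h1', h2'⟩ := H'
  exact ⟨G + G', fun x => add_le_add (h1 x) (h1' x), (norm_add_le _ _).trans (add_le_add h2 h2')⟩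

lemma Dom.const_mul {h : (Fin d → ℤ) → ℝ} {c : ℝ} (H : Dom h c) {a : ℝ} (ha : 0 ≤ a) :
    Dom (fun x => a * h x) (a * c) := by
  obtain ⟨G, h1, h2⟩ := H
  refine ⟨a • G, fun x => mul_le_mul_of_nonneg_left (h1 x) ha, ?_⟩
  rw [norm_smul, Real.norm_of_nonneg ha]
  exact mul_le_mul_of_nonneg_left h2 ha

lemma Dom.sum {ι : Type*} (s : Finset ι) {h : ι → (Fin d → ℤ) → ℝ} {c : ι → ℝ}
    (H : ∀ i, Dom (h i) (c i)) : Dom (fun x => ∑ i ∈ s, h i x) (∑ i ∈ s, c i) := by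
  classical
  induction s using Finset.induction_on with
  | empty => exact ⟨0, fun x => by simp, by simp⟩
  | insert i s hi ih => simpa only [Finset.sum_insert hi] using (H i).add ih

lemma Dom.apply_le {h : (Fin d → ℤ) → ℝ} {c : ℝ} (H : Dom h c) (x : Fin d → ℤ) : h x ≤ c := by
  obtain ⟨G, h1, h2⟩ := H
  exact (h1 x).trans ((le_abs_self _).trans ((lp.norm_apply_le_norm two_ne_zero G x).trans h2))

lemma Dom.memℓp {h : (Fin d → ℤ) → ℝ} {c : ℝ} (H : Dom h c) {f : (Fin d → ℤ) → ℂ}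
    (hf : ∀ x, ‖f x‖ ≤ h x) : Memℓp f 2 := by
  obtain ⟨G, h1, -⟩ := H
  exact (lp.memℓp G).mono' fun x => (hf x).trans ((h1 x).trans (le_abs_self _))

lemma Dom.norm_le {h : (Fin d → ℤ) → ℝ} {c : ℝ} (H : Dom h c) {f : L2 d}
    (hf : ∀ x, ‖f x‖ ≤ h x) : ‖f‖ ≤ c := by
  obtain ⟨G, h1, h2⟩ := H
  exact (lp.norm_mono two_ne_zero
    (fun x => (hf x).trans ((h1 x).trans (le_abs_self _)))).trans h2

/-- The phase space of pairs `(U, V)` of weighted position and velocity, as a Hilbert space. -/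
abbrev Ph (d : ℕ) := WithLp 2 (L2 d × L2 d)

/-- The weighted pointwise state `(U, V, D₁U, …, D_dU)` at `x`, a bounded linear function of
`(U, V)`. -/
def stateL (D : Fin d → L2 d →L[ℝ] L2 d) (x : Fin d → ℤ) :
    Ph d →L[ℝ] ℂ × (Fin (d + 1) → ℂ) :=
  ((lp.evalCLM ℝ (fun _ : Fin d → ℤ => ℂ) 2 x) ∘L WithLp.fstL 2 ℝ (L2 d) (L2 d)).prod
    (ContinuousLinearMap.pi (Fin.cons
      ((lp.evalCLM ℝ (fun _ : Fin d → ℤ => ℂ) 2 x) ∘L WithLp.sndL 2 ℝ (L2 d) (L2 d))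
      fun i => (lp.evalCLM ℝ (fun _ : Fin d → ℤ => ℂ) 2 x) ∘L D i ∘L
        WithLp.fstL 2 ℝ (L2 d) (L2 d)))

lemma stateL_apply (D : Fin d → L2 d →L[ℝ] L2 d) (x : Fin d → ℤ) (p : Ph d) :
    stateL D x p = (p.fst x, Fin.cons (p.snd x) fun i => D i p.fst x) := by
  refine Prod.ext rfl ?_
  funext i
  refine Fin.cases ?_ (fun i => ?_) i <;> rfl

/-- Pointwise size of the first-order state. -/
def size1 (D : Fin d → L2 d →L[ℝ] L2 d) (p : Ph d) (x : Fin d → ℤ) : ℝ :=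
  ‖p.fst x‖ + ‖p.snd x‖ + ∑ i, ‖D i p.fst x‖

/-- Pointwise size of the second-order derivatives. -/
def size2 (D : Fin d → L2 d →L[ℝ] L2 d) (p : Ph d) (x : Fin d → ℤ) : ℝ :=
  ∑ j, ∑ l, ‖D j (D l p.fst) x‖

lemma norm_stateL_le (D : Fin d → L2 d →L[ℝ] L2 d) (x : Fin d → ℤ) (p : Ph d) :
    ‖stateL D x p‖ ≤ size1 D p x := by
  have h0 : 0 ≤ ∑ i, ‖D i p.fst x‖ := Finset.sum_nonneg fun _ _ => norm_nonneg _
  have h1 := norm_nonneg (p.fst x)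
  have h2 := norm_nonneg (p.snd x)
  rw [stateL_apply, size1, norm_prod_le_iff]
  refine ⟨by simp only; linarith, (pi_norm_le_iff_of_nonneg (by linarith)).2 fun i => ?_⟩
  refine Fin.cases ?_ (fun i => ?_) i
  · simp only [Fin.cons_zero]; linarith
  · simp only [Fin.cons_succ]
    have := Finset.single_le_sum (f := fun i => ‖D i p.fst x‖) (fun _ _ => norm_nonneg _)
      (Finset.mem_univ i)
    simp only at this
    linarith

/-- Operator bound for the first-order state. -/
def bd1 (D : Fin d → L2 d →L[ℝ] L2 d) : ℝ := 1 + 1 + ∑ i, ‖D i‖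

/-- Operator bound for the second-order derivatives. -/
def bd2 (D : Fin d → L2 d →L[ℝ] L2 d) : ℝ := ∑ j, ∑ l, ‖D j‖ * ‖D l‖

lemma bd1_nonneg (D : Fin d → L2 d →L[ℝ] L2 d) : 0 ≤ bd1 D := by unfold bd1; positivity

lemma bd2_nonneg (D : Fin d → L2 d →L[ℝ] L2 d) : 0 ≤ bd2 D := by unfold bd2; positivity

lemma dom_size1 (D : Fin d → L2 d →L[ℝ] L2 d) (p : Ph d) : Dom (size1 D p) (bd1 D * ‖p‖) := by
  have h1 : Dom (fun x => ‖p.fst x‖) ‖p‖ := Dom.of _ (WithLp.norm_fst_le _ _)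
  have h2 : Dom (fun x => ‖p.snd x‖) ‖p‖ := Dom.of _ (WithLp.norm_snd_le _ _)
  have h3 : ∀ i, Dom (fun x => ‖D i p.fst x‖) (‖D i‖ * ‖p‖) := fun i =>
    Dom.of _ (((D i).le_opNorm _).trans (by gcongr; exact WithLp.norm_fst_le _ _))
  have := (h1.add h2).add (Dom.sum Finset.univ h3)
  rw [bd1, add_mul, add_mul, one_mul, Finset.sum_mul]
  exact this

lemma dom_size2 (D : Fin d → L2 d →L[ℝ] L2 d) (p : Ph d) : Dom (size2 D p) (bd2 D * ‖p‖) := by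
  have h3 : ∀ j l, Dom (fun x => ‖D j (D l p.fst) x‖) (‖D j‖ * ‖D l‖ * ‖p‖) := fun j l =>
    Dom.of _ (((D j).le_opNorm _).trans (by
      rw [mul_assoc]
      gcongr
      exact ((D l).le_opNorm _).trans (by gcongr; exact WithLp.norm_fst_le _ _)))
  have := Dom.sum Finset.univ fun j => Dom.sum Finset.univ (h3 j)
  simp only [bd2, Finset.sum_mul]
  exact this

/-- The weighted right-hand side `∑ g^{jl}(s) Dⱼ D_l U + ⟨x⟩^k F(s)` with `s = ⟨x⟩^{-k}(U, V, DU)`,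
as a function on `ℤ^d`. -/
def rhs (k : ℕ) (gc : Fin d → Fin d → ℂ × (Fin (d + 1) → ℂ) → ℝ)
    (F : ℂ × (Fin (d + 1) → ℂ) → ℂ) (D : Fin d → L2 d →L[ℝ] L2 d) (p : Ph d)
    (x : Fin d → ℤ) : ℂ :=
  (∑ j, ∑ l, (gc j l ((wt k x)⁻¹ • stateL D x p) : ℂ) * D j (D l p.fst) x)
    + ((wt k x : ℝ) : ℂ) * F ((wt k x)⁻¹ • stateL D x p)

open scoped Classical in
/-- `rhs` as an element of `ℓ²`, with the value `0` where it fails to be square summable. -/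
def rhsVec (k : ℕ) (gc : Fin d → Fin d → ℂ × (Fin (d + 1) → ℂ) → ℝ)
    (F : ℂ × (Fin (d + 1) → ℂ) → ℂ) (D : Fin d → L2 d →L[ℝ] L2 d) (p : Ph d) : L2 d :=
  if h : Memℓp (rhs k gc F D p) 2 then ⟨rhs k gc F D p, h⟩ else 0

/-- The first-order vector field `(U, V) ↦ (V, rhs(U, V))`. -/
def field (k : ℕ) (gc : Fin d → Fin d → ℂ × (Fin (d + 1) → ℂ) → ℝ)
    (F : ℂ × (Fin (d + 1) → ℂ) → ℂ) (D : Fin d → L2 d →L[ℝ] L2 d) (p : Ph d) : Ph d :=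
  WithLp.toLp 2 (p.snd, rhsVec k gc F D p)

lemma norm_toLp_le (a b : L2 d) : ‖(WithLp.toLp 2 (a, b) : Ph d)‖ ≤ ‖a‖ + ‖b‖ := by
  rw [show (WithLp.toLp 2 (a, b) : Ph d) = WithLp.toLp 2 (a, 0) + WithLp.toLp 2 (0, b) by
    rw [← WithLp.toLp_add]; simp]
  refine (norm_add_le _ _).trans ?_
  rw [WithLp.norm_toLp_fst, WithLp.norm_toLp_snd]


/-- Local bounds for the coefficients: `F` is Lipschitz with constant `L`, and the `g^{jl}` are
bounded by `M` and uniformly continuous, on the ball of radius `R`. -/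
lemma exists_coeff_bounds (gc : Fin d → Fin d → ℂ × (Fin (d + 1) → ℂ) → ℝ)
    (hgc : ∀ j l, Continuous (gc j l))
    (F : ℂ × (Fin (d + 1) → ℂ) → ℂ) (hF : ContDiff ℝ 1 F) (R : ℝ) :
    ∃ L M : ℝ, 0 ≤ L ∧ 0 ≤ M ∧
      (∀ s s', ‖s‖ ≤ R → ‖s'‖ ≤ R → ‖F s - F s'‖ ≤ L * ‖s - s'‖) ∧
      (∀ j l s, ‖s‖ ≤ R → |gc j l s| ≤ M) ∧
      (∀ ω > 0, ∃ ρ > 0, ∀ j l s s', ‖s‖ ≤ R → ‖s'‖ ≤ R → ‖s - s'‖ < ρ →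
        |gc j l s - gc j l s'| ≤ ω) := by
  have hc := isCompact_closedBall (0 : ℂ × (Fin (d + 1) → ℂ)) R
  have hcg : Continuous fun s => (fun j l => gc j l s) :=
    continuous_pi fun j => continuous_pi fun l => hgc j l
  obtain ⟨L, hL⟩ := hc.exists_bound_of_continuousOn
    (hF.continuous_fderiv (by norm_num)).continuousOn
  obtain ⟨M, hM⟩ := hc.exists_bound_of_continuousOn hcg.continuousOn
  have hu := hc.uniformContinuousOn_of_continuous hcg.continuousOn
  rw [Metric.uniformContinuousOn_iff] at hu
  simp only [Metric.mem_closedBall, dist_zero_right] at hL hM hu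
  refine ⟨max L 0, max M 0, le_max_right _ _, le_max_right _ _, fun s s' hs hs' => ?_,
    fun j l s hs => ?_, fun ω hω => ?_⟩
  · refine (convex_closedBall (0 : ℂ × (Fin (d + 1) → ℂ)) R).norm_image_sub_le_of_norm_fderiv_le
      (𝕜 := ℝ) (f := F) (fun z _ => (hF.differentiable (by norm_num)) z)
      (fun z hz => (hL z (by simpa using hz)).trans (le_max_left _ _)) (by simpa using hs')
      (by simpa using hs)
  · refine ((norm_le_pi_norm (fun l => gc j l s) l).trans
      ((norm_le_pi_norm (fun j l => gc j l s) j).trans (hM s hs))).trans (le_max_left _ _)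
  · obtain ⟨ρ, hρ, h⟩ := hu ω hω
    refine ⟨ρ, hρ, fun j l s s' hs hs' hss => ?_⟩
    have h1 := (h s hs s' hs' (by rwa [dist_eq_norm])).le
    exact (dist_le_pi_dist (fun l => gc j l s) (fun l => gc j l s') l).trans
      ((dist_le_pi_dist (fun j l => gc j l s) (fun j l => gc j l s') j).trans h1)

section Field

variable {k : ℕ} {gc : Fin d → Fin d → ℂ × (Fin (d + 1) → ℂ) → ℝ}
  {F : ℂ × (Fin (d + 1) → ℂ) → ℂ} {D : Fin d → L2 d →L[ℝ] L2 d} {L M : ℝ}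

lemma norm_inv_wt_smul_le (x : Fin d → ℤ) (w : ℂ × (Fin (d + 1) → ℂ)) :
    ‖(wt k x)⁻¹ • w‖ ≤ ‖w‖ := by
  rw [norm_smul, norm_inv, Real.norm_of_nonneg (wt_pos k x).le]
  exact mul_le_of_le_one_left (norm_nonneg _) (inv_le_one_of_one_le₀ (one_le_wt k x))

/-- On the unit ball of the phase space all pointwise states lie in a fixed ball. -/
lemma norm_state_le (x : Fin d → ℤ) {p : Ph d} (hp : ‖p‖ ≤ 1) :
    ‖(wt k x)⁻¹ • stateL D x p‖ ≤ bd1 D :=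
  (norm_inv_wt_smul_le x _).trans ((norm_stateL_le D x p).trans
    (((dom_size1 D p).apply_le x).trans (mul_le_of_le_one_right (bd1_nonneg D) hp)))

/-- The weight in front of `F` is absorbed by the Lipschitz bound. -/
lemma norm_wt_mul_sub_le
    (hL : ∀ s s', ‖s‖ ≤ bd1 D → ‖s'‖ ≤ bd1 D → ‖F s - F s'‖ ≤ L * ‖s - s'‖) (hL0 : 0 ≤ L)
    (x : Fin d → ℤ) {p q : Ph d} (hp : ‖p‖ ≤ 1) (hq : ‖q‖ ≤ 1) :
    ‖((wt k x : ℝ) : ℂ) * F ((wt k x)⁻¹ • stateL D x p)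
      - ((wt k x : ℝ) : ℂ) * F ((wt k x)⁻¹ • stateL D x q)‖ ≤ L * size1 D (p - q) x := by
  have hw := wt_pos k x
  rw [← mul_sub, norm_mul, Complex.norm_real, Real.norm_of_nonneg hw.le]
  calc wt k x * ‖F ((wt k x)⁻¹ • stateL D x p) - F ((wt k x)⁻¹ • stateL D x q)‖
      ≤ wt k x * (L * ‖(wt k x)⁻¹ • stateL D x p - (wt k x)⁻¹ • stateL D x q‖) := by
        gcongr
        exact hL _ _ (norm_state_le x hp) (norm_state_le x hq)
    _ = L * ‖stateL D x (p - q)‖ := by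
        rw [← smul_sub, ← map_sub, norm_smul, norm_inv, Real.norm_of_nonneg hw.le]
        field_simp
    _ ≤ _ := by
        gcongr
        exact norm_stateL_le D x _

lemma norm_rhs_le (hF0 : F 0 = 0)
    (hL : ∀ s s', ‖s‖ ≤ bd1 D → ‖s'‖ ≤ bd1 D → ‖F s - F s'‖ ≤ L * ‖s - s'‖) (hL0 : 0 ≤ L)
    (hM : ∀ j l s, ‖s‖ ≤ bd1 D → |gc j l s| ≤ M) {p : Ph d} (hp : ‖p‖ ≤ 1) (x : Fin d → ℤ) :
    ‖rhs k gc F D p x‖ ≤ M * size2 D p x + L * size1 D p x := by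
  refine (norm_add_le _ _).trans (add_le_add ?_ ?_)
  · rw [size2, Finset.mul_sum]
    refine norm_sum_le_of_le _ fun j _ => ?_
    rw [Finset.mul_sum]
    refine norm_sum_le_of_le _ fun l _ => ?_
    rw [norm_mul, Complex.norm_real, Real.norm_eq_abs]
    gcongr
    exact hM j l _ (norm_state_le x hp)
  · have := norm_wt_mul_sub_le (k := k) hL hL0 x hp (q := 0) (by simp)
    simpa [hF0] using this

lemma memℓp_rhs (hF0 : F 0 = 0)
    (hL : ∀ s s', ‖s‖ ≤ bd1 D → ‖s'‖ ≤ bd1 D → ‖F s - F s'‖ ≤ L * ‖s - s'‖) (hL0 : 0 ≤ L)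
    (hM : ∀ j l s, ‖s‖ ≤ bd1 D → |gc j l s| ≤ M) (hM0 : 0 ≤ M) {p : Ph d} (hp : ‖p‖ ≤ 1) :
    Memℓp (rhs k gc F D p) 2 :=
  (((dom_size2 D p).const_mul hM0).add ((dom_size1 D p).const_mul hL0)).memℓp
    (norm_rhs_le hF0 hL hL0 hM hp)

lemma rhsVec_apply (hF0 : F 0 = 0)
    (hL : ∀ s s', ‖s‖ ≤ bd1 D → ‖s'‖ ≤ bd1 D → ‖F s - F s'‖ ≤ L * ‖s - s'‖) (hL0 : 0 ≤ L)
    (hM : ∀ j l s, ‖s‖ ≤ bd1 D → |gc j l s| ≤ M) (hM0 : 0 ≤ M) {p : Ph d} (hp : ‖p‖ ≤ 1)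
    (x : Fin d → ℤ) : rhsVec k gc F D p x = rhs k gc F D p x := by
  rw [rhsVec, dif_pos (memℓp_rhs hF0 hL hL0 hM hM0 hp)]

/-- Linear growth of the vector field on the unit ball. -/
lemma norm_field_le (hF0 : F 0 = 0)
    (hL : ∀ s s', ‖s‖ ≤ bd1 D → ‖s'‖ ≤ bd1 D → ‖F s - F s'‖ ≤ L * ‖s - s'‖) (hL0 : 0 ≤ L)
    (hM : ∀ j l s, ‖s‖ ≤ bd1 D → |gc j l s| ≤ M) (hM0 : 0 ≤ M) {p : Ph d} (hp : ‖p‖ ≤ 1) :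
    ‖field k gc F D p‖ ≤ (1 + (M * bd2 D + L * bd1 D)) * ‖p‖ := by
  have h1 := (((dom_size2 D p).const_mul hM0).add ((dom_size1 D p).const_mul hL0)).norm_le
    (f := rhsVec k gc F D p) (fun x => by
      rw [rhsVec_apply hF0 hL hL0 hM hM0 hp]
      exact norm_rhs_le hF0 hL hL0 hM hp x)
  have h2 := WithLp.norm_snd_le _ p
  refine (norm_toLp_le _ _).trans ?_
  linarith

lemma norm_rhs_sub_le
    (hL : ∀ s s', ‖s‖ ≤ bd1 D → ‖s'‖ ≤ bd1 D → ‖F s - F s'‖ ≤ L * ‖s - s'‖) (hL0 : 0 ≤ L)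
    (hM : ∀ j l s, ‖s‖ ≤ bd1 D → |gc j l s| ≤ M) {ω ρ : ℝ}
    (hω : ∀ j l s s', ‖s‖ ≤ bd1 D → ‖s'‖ ≤ bd1 D → ‖s - s'‖ < ρ → |gc j l s - gc j l s'| ≤ ω)
    {p q : Ph d} (hp : ‖p‖ ≤ 1) (hq : ‖q‖ ≤ 1) (hpq : bd1 D * ‖p - q‖ < ρ) (x : Fin d → ℤ) :
    ‖rhs k gc F D p x - rhs k gc F D q x‖
      ≤ ω * size2 D p x + M * size2 D (p - q) x + L * size1 D (p - q) x := by
  rw [rhs, rhs, add_sub_add_comm]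
  refine (norm_add_le _ _).trans (add_le_add ?_ (norm_wt_mul_sub_le hL hL0 x hp hq))
  have hs : ‖(wt k x)⁻¹ • stateL D x p - (wt k x)⁻¹ • stateL D x q‖ < ρ := by
    rw [← smul_sub, ← map_sub]
    exact (norm_inv_wt_smul_le x _).trans_lt ((norm_stateL_le D x _).trans_lt
      (((dom_size1 D _).apply_le x).trans_lt hpq))
  simp only [size2, Finset.mul_sum, ← Finset.sum_sub_distrib, ← Finset.sum_add_distrib]
  refine norm_sum_le_of_le _ fun j _ => norm_sum_le_of_le _ fun l _ => ?_
  have e : D j (D l (p - q).fst) x = D j (D l p.fst) x - D j (D l q.fst) x := by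
    rw [WithLp.sub_fst, map_sub, map_sub, lp.coeFn_sub, Pi.sub_apply]
  rw [e]
  have h1 := hω j l _ _ (norm_state_le x hp) (norm_state_le x hq) hs
  have h2 := hM j l _ (norm_state_le (k := k) x hq)
  generalize gc j l ((wt k x)⁻¹ • stateL D x p) = a at h1 ⊢
  generalize gc j l ((wt k x)⁻¹ • stateL D x q) = b at h1 h2 ⊢
  generalize D j (D l p.fst) x = v
  generalize D j (D l q.fst) x = w
  rw [show (a : ℂ) * v - b * w = ((a - b : ℝ) : ℂ) * v + (b : ℂ) * (v - w) by push_cast; ring]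
  refine (norm_add_le _ _).trans ?_
  rw [norm_mul, norm_mul, Complex.norm_real, Complex.norm_real, Real.norm_eq_abs, Real.norm_eq_abs]
  gcongr

/-- Uniform continuity of the vector field on the unit ball. -/
lemma field_uniform (hF0 : F 0 = 0)
    (hL : ∀ s s', ‖s‖ ≤ bd1 D → ‖s'‖ ≤ bd1 D → ‖F s - F s'‖ ≤ L * ‖s - s'‖) (hL0 : 0 ≤ L)
    (hM : ∀ j l s, ‖s‖ ≤ bd1 D → |gc j l s| ≤ M) (hM0 : 0 ≤ M)
    (hu : ∀ ω > 0, ∃ ρ > 0, ∀ j l s s', ‖s‖ ≤ bd1 D → ‖s'‖ ≤ bd1 D → ‖s - s'‖ < ρ →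
        |gc j l s - gc j l s'| ≤ ω) (η : ℝ) (hη : 0 < η) :
    ∃ ρ > 0, ∀ p q : Ph d, ‖p‖ ≤ 1 → ‖q‖ ≤ 1 → ‖p - q‖ < ρ →
      ‖field k gc F D p - field k gc F D q‖ ≤ η := by
  have hB1 := bd1_nonneg D
  have hB2 := bd2_nonneg D
  obtain ⟨ρ, hρ, hω⟩ := hu (η / (2 * (bd2 D + 1))) (by positivity)
  set A := 1 + M * bd2 D + L * bd1 D with hA
  have hA0 : 0 < A := by positivity
  refine ⟨min (ρ / (bd1 D + 1)) (η / (2 * A)), by positivity, fun p q hp hq hpq => ?_⟩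
  have hpq1 : bd1 D * ‖p - q‖ < ρ := by
    have h := hpq.trans_le (min_le_left _ _)
    rw [lt_div_iff₀ (by positivity)] at h
    have := norm_nonneg (p - q)
    nlinarith
  have hpq2 : ‖p - q‖ * (2 * A) < η := by
    have h := hpq.trans_le (min_le_right _ _)
    rwa [lt_div_iff₀ (by positivity)] at h
  have hω0 : 0 ≤ η / (2 * (bd2 D + 1)) := by positivity
  have h1 := ((((dom_size2 D p).const_mul hω0).add ((dom_size2 D (p - q)).const_mul hM0)).add
    ((dom_size1 D (p - q)).const_mul hL0)).norm_le
    (f := rhsVec k gc F D p - rhsVec k gc F D q) (fun x => by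
      rw [lp.coeFn_sub, Pi.sub_apply, rhsVec_apply hF0 hL hL0 hM hM0 hp,
        rhsVec_apply hF0 hL hL0 hM hM0 hq]
      exact norm_rhs_sub_le hL hL0 hM hω hp hq hpq1 x)
  have h2 := WithLp.norm_snd_le _ (p - q)
  rw [WithLp.sub_snd] at h2
  have h3 : field k gc F D p - field k gc F D q
      = WithLp.toLp 2 (p.snd - q.snd, rhsVec k gc F D p - rhsVec k gc F D q) := rfl
  rw [h3]
  refine (norm_toLp_le _ _).trans ?_
  have h4 : η / (2 * (bd2 D + 1)) * (bd2 D * ‖p‖) ≤ η / 2 := by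
    have : bd2 D * ‖p‖ ≤ bd2 D + 1 := by nlinarith [norm_nonneg p]
    calc η / (2 * (bd2 D + 1)) * (bd2 D * ‖p‖) ≤ η / (2 * (bd2 D + 1)) * (bd2 D + 1) := by gcongr
      _ = η / 2 := by field_simp
  have h5 : ‖p - q‖ * A = ‖p - q‖ + M * (bd2 D * ‖p - q‖) + L * (bd1 D * ‖p - q‖) := by
    rw [hA]; ring
  linarith

/-- Weak convergence implies convergence of the state at each point. -/
lemma WeakLim.stateL {α : Type*} {l : Filter α} {p : α → Ph d} {q : Ph d} (h : WeakLim l p q)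
    (x : Fin d → ℤ) : Tendsto (fun n => stateL D x (p n)) l (nhds (stateL D x q)) := by
  refine Tendsto.prodMk_nhds
    (h.clm_complex ((ContinuousLinearMap.fst ℝ ℂ (Fin (d + 1) → ℂ)) ∘L _root_.stateL D x))
    (tendsto_pi_nhds.2 fun i => h.clm_complex ((ContinuousLinearMap.proj (R := ℝ) (φ := fun _ : Fin (d + 1) => ℂ) i) ∘L
      (ContinuousLinearMap.snd ℝ ℂ (Fin (d + 1) → ℂ)) ∘L _root_.stateL D x))

/-- The vector field has weakly closed graph over the unit ball, because each of its coordinates is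
a continuous function of finitely many bounded linear functionals. -/
lemma field_weak (hgc : ∀ j l, Continuous (gc j l)) (hF : Continuous F) (hF0 : F 0 = 0)
    (hL : ∀ s s', ‖s‖ ≤ bd1 D → ‖s'‖ ≤ bd1 D → ‖F s - F s'‖ ≤ L * ‖s - s'‖) (hL0 : 0 ≤ L)
    (hM : ∀ j l s, ‖s‖ ≤ bd1 D → |gc j l s| ≤ M) (hM0 : 0 ≤ M)
    (U : Ultrafilter ℕ) (p : ℕ → Ph d) (q z : Ph d)
    (hp : ∀ᶠ n in (U : Filter ℕ), ‖p n‖ ≤ 1) (hq : ‖q‖ ≤ 1) (hpq : WeakLim (U : Filter ℕ) p q)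
    (hz : WeakLim (U : Filter ℕ) (fun n => field k gc F D (p n)) z) : z = field k gc F D q := by
  let ev := fun x => lp.evalCLM ℝ (fun _ : Fin d → ℤ => ℂ) 2 x
  have h1 : z.fst = (field k gc F D q).fst := by
    ext x
    have e1 := hz.clm_complex (ev x ∘L WithLp.fstL 2 ℝ (L2 d) (L2 d))
    have e2 := hpq.clm_complex (ev x ∘L WithLp.sndL 2 ℝ (L2 d) (L2 d))
    exact tendsto_nhds_unique e1 e2
  have h2 : z.snd = (field k gc F D q).snd := by
    ext x
    have e1 := hz.clm_complex (ev x ∘L WithLp.sndL 2 ℝ (L2 d) (L2 d))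
    have e2 : Tendsto (fun n => rhs k gc F D (p n) x) (U : Filter ℕ) (nhds (rhs k gc F D q x)) := by
      have hs := (hpq.stateL (D := D) x).const_smul ((wt k x)⁻¹)
      refine Tendsto.add (tendsto_finsetSum _ fun j _ => tendsto_finsetSum _ fun l _ => ?_)
        ((((hF.tendsto _).comp hs)).const_mul _)
      exact ((Complex.continuous_ofReal.tendsto _).comp (((hgc j l).tendsto _).comp hs)).mul
        (hpq.clm_complex (ev x ∘L D j ∘L D l ∘L WithLp.fstL 2 ℝ (L2 d) (L2 d)))
    have e3 : Tendsto (fun n => rhs k gc F D (p n) x) (U : Filter ℕ) (nhds (z.snd x)) := by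
      refine e1.congr' ?_
      filter_upwards [hp] with n hn
      exact rhsVec_apply hF0 hL hL0 hM hM0 hn x
    rw [tendsto_nhds_unique e3 e2]
    exact (rhsVec_apply hF0 hL hL0 hM hM0 hq x).symm
  exact WithLp.ofLp_injective 2 (Prod.ext h1 h2)

end Field

end Nonlinearity

/-! ### Passing between `ℓ²` and `ℓ^{2,k}` -/

section Transfer

variable {d : ℕ}

/-- The function `⟨m⟩^{-k} U(m)` in `ℓ^{2,k}` attached to `U ∈ ℓ²`. -/
def unwt (k : ℕ) (U : L2 d) (m : Fin d → ℤ) : ℂ := ((wt k m : ℝ) : ℂ)⁻¹ * U m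

lemma wt_ne_zero (k : ℕ) (m : Fin d → ℤ) : ((wt k m : ℝ) : ℂ) ≠ 0 := by
  exact_mod_cast (wt_pos k m).ne'

lemma w2_unwt (k : ℕ) (U : L2 d) : w2 k (unwt k U) = ENNReal.ofReal ‖U‖ := by
  have h0 : (fun m => ((jap m ^ k : ℝ) : ℂ) * unwt k U m) = fun m => U m := by
    funext m
    exact mul_inv_cancel_left₀ (wt_ne_zero k m) (U m)
  have h2 : (0 : ℝ) < (2 : ℝ≥0∞).toReal := by norm_num
  rw [w2, h0, lpn, if_neg (by norm_num), lp.norm_eq_tsum_rpow h2,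
    ← ENNReal.ofReal_rpow_of_nonneg (tsum_nonneg fun m => by positivity) (by positivity),
    ENNReal.ofReal_tsum_of_nonneg (fun m => by positivity) ((lp.memℓp U).summable h2)]
  congr 2
  funext m
  rw [← ENNReal.ofReal_rpow_of_nonneg (norm_nonneg _) h2.le, ofReal_norm]
  rfl

lemma exists_unwt_eq (k : ℕ) {f : (Fin d → ℤ) → ℂ} (hf : w2 k f < ⊤) :
    ∃ U : L2 d, unwt k U = f := by
  have h2 : (2 : ℝ≥0∞) ≠ ⊤ := by norm_num
  rw [w2, lpn, if_neg h2, ENNReal.toReal_ofNat, ENNReal.rpow_lt_top_iff_of_pos (by norm_num)] at hf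
  have hm : Memℓp (fun m => ((wt k m : ℝ) : ℂ) * f m) 2 := by
    refine memℓp_gen ?_
    have hs : Summable fun m => (‖((wt k m : ℝ) : ℂ) * f m‖₊ ^ (2 : ℝ) : ℝ≥0) := by
      rw [← ENNReal.tsum_coe_ne_top_iff_summable]
      refine ne_of_eq_of_ne ?_ hf.ne
      congr 1
      funext m
      exact (ENNReal.coe_rpow_of_nonneg _ (by norm_num)).trans rfl
    have := NNReal.summable_coe.2 hs
    simpa using this
  refine ⟨⟨_, hm⟩, ?_⟩
  funext m
  exact inv_mul_cancel_left₀ (wt_ne_zero k m) (f m)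

lemma contW_unwt (k : ℕ) {S : Set ℝ} {Y : ℝ → L2 d} (hY : ContinuousOn Y S) :
    ContW k S (fun t => unwt k (Y t)) := by
  intro t ht
  have e : ∀ s, (fun m => unwt k (Y s) m - unwt k (Y t) m) = unwt k (Y s - Y t) := by
    intro s
    funext m
    simp only [unwt, lp.coeFn_sub, Pi.sub_apply, mul_sub]
  simp only [e, w2_unwt]
  rw [← ENNReal.ofReal_zero]
  refine ENNReal.tendsto_ofReal ?_
  exact tendsto_iff_norm_sub_tendsto_zero.1 (hY t ht)

lemma derivW_unwt (k : ℕ) {S : Set ℝ} {Y Y' : ℝ → L2 d}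
    (hY : ∀ t ∈ S, HasDerivWithinAt Y (Y' t) S t) :
    DerivW k S (fun t => unwt k (Y t)) (fun t => unwt k (Y' t)) := by
  intro t ht
  have e : ∀ s, (fun m => (s - t)⁻¹ • (unwt k (Y s) m - unwt k (Y t) m) - unwt k (Y' t) m)
      = unwt k (slope Y t s - Y' t) := by
    intro s
    funext m
    simp only [unwt, slope_def_module, lp.coeFn_sub, lp.coeFn_smul, Pi.smul_apply, Pi.sub_apply,
      Complex.real_smul]
    ring
  simp only [e, w2_unwt]
  rw [← ENNReal.ofReal_zero]
  refine ENNReal.tendsto_ofReal ?_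
  exact tendsto_iff_norm_sub_tendsto_zero.1 (hasDerivWithinAt_iff_tendsto_slope.1 (hY t ht))

/-- An integral curve of the vector field in the unit ball yields a solution of the wave
equation. -/
lemma qlsol_of_curve {k : ℕ} {gc : Fin d → Fin d → ℂ × (Fin (d + 1) → ℂ) → ℝ}
    {F : ℂ × (Fin (d + 1) → ℂ) → ℂ} {D : Fin d → L2 d →L[ℝ] L2 d}
    (hD : ∀ j U, pd j (unwt k U) = unwt k (D j U))
    (happ : ∀ p : Ph d, ‖p‖ ≤ 1 → ∀ x, rhsVec k gc F D p x = rhs k gc F D p x)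
    (huc : ∀ η > 0, ∃ ρ > 0, ∀ p q : Ph d, ‖p‖ ≤ 1 → ‖q‖ ≤ 1 → ‖p - q‖ < ρ →
      ‖field k gc F D p - field k gc F D q‖ ≤ η)
    {S : Set ℝ} {X : ℝ → Ph d} {p0 : Ph d} (hX0 : X 0 = p0)
    (hX : ∀ t ∈ S, ‖X t‖ ≤ 1 ∧ HasDerivWithinAt X (field k gc F D (X t)) S t) :
    QLSol d k gc F (unwt k p0.fst) (unwt k p0.snd) S (fun t => unwt k (X t).fst)
      (fun t => unwt k (X t).snd) (fun t => unwt k (rhsVec k gc F D (X t))) := by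
  have hXc : ContinuousOn X S := fun t ht => (hX t ht).2.continuousWithinAt
  have hd1 : ∀ t ∈ S, HasDerivWithinAt (fun t => (X t).fst) ((X t).snd) S t := fun t ht =>
    (WithLp.fstL 2 ℝ (L2 d) (L2 d)).hasFDerivAt.comp_hasDerivWithinAt t (hX t ht).2
  have hd2 : ∀ t ∈ S, HasDerivWithinAt (fun t => (X t).snd) (rhsVec k gc F D (X t)) S t :=
    fun t ht => (WithLp.sndL 2 ℝ (L2 d) (L2 d)).hasFDerivAt.comp_hasDerivWithinAt t (hX t ht).2
  have hc2 : ContinuousOn (fun t => rhsVec k gc F D (X t)) S := by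
    have hG : ContinuousOn (field k gc F D) (Metric.closedBall 0 1) := by
      rw [Metric.continuousOn_iff]
      intro p hp η hη
      obtain ⟨ρ, hρ, h⟩ := huc (η / 2) (by positivity)
      refine ⟨ρ, hρ, fun q hq hqp => ?_⟩
      rw [dist_eq_norm] at hqp ⊢
      exact (h q p (by simpa using hq) (by simpa using hp) hqp).trans_lt (by linarith)
    exact (WithLp.sndL 2 ℝ (L2 d) (L2 d)).continuous.comp_continuousOn
      (hG.comp hXc fun t ht => by simpa using (hX t ht).1)
  refine ⟨⟨fun t _ => ?_, fun t _ => ?_, fun t _ => ?_,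
    contW_unwt k fun t ht => (hd1 t ht).continuousWithinAt,
    contW_unwt k fun t ht => (hd2 t ht).continuousWithinAt, contW_unwt k hc2,
    derivW_unwt k hd1, derivW_unwt k hd2⟩, fun t ht x => ?_, fun x => ?_, fun x => ?_⟩
  · rw [w2_unwt]; exact ENNReal.ofReal_lt_top
  · rw [w2_unwt]; exact ENNReal.ofReal_lt_top
  · rw [w2_unwt]; exact ENNReal.ofReal_lt_top
  · have hst : state (fun t => unwt k (X t).fst) (fun t => unwt k (X t).snd) t x
        = (wt k x)⁻¹ • stateL D x (X t) := by
      rw [stateL_apply, state]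
      refine Prod.ext ?_ ?_
      · simp [unwt, Complex.real_smul]
      · funext i
        refine Fin.cases ?_ (fun i => ?_) i
        · simp [unwt, Complex.real_smul]
        · simp only [hD]
          simp [unwt, Complex.real_smul]
    simp only [hst, hD]
    rw [unwt, happ _ (hX t ht).1, rhs, mul_add, inv_mul_cancel_left₀ (wt_ne_zero k x),
      Finset.mul_sum, add_sub_right_comm, add_eq_right, sub_eq_zero]
    refine Finset.sum_congr rfl fun j _ => ?_
    rw [Finset.mul_sum]
    refine Finset.sum_congr rfl fun l _ => ?_
    rw [unwt]
    ring
  · simp only [hX0]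
  · simp only [hX0]

/-- Since `log (1/ε) ≤ 2 ε^{-1/2}`, the product `ε log (1/ε)` is at most `2 √ε`. -/
lemma mul_log_le {ε : ℝ} (hε : 0 < ε) : ε * Real.log (1 / ε) ≤ 2 * Real.sqrt ε := by
  have hs : 0 < Real.sqrt ε := Real.sqrt_pos.2 hε
  have h1 : Real.log (1 / ε) = 2 * Real.log (1 / Real.sqrt ε) := by
    rw [one_div, one_div, Real.log_inv, Real.log_inv, Real.log_sqrt hε.le]
    ring
  have h2 : Real.log (1 / Real.sqrt ε) ≤ 1 / Real.sqrt ε :=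
    (Real.log_le_sub_one_of_pos (by positivity)).trans (by linarith)
  rw [h1]
  calc ε * (2 * Real.log (1 / Real.sqrt ε)) ≤ ε * (2 * (1 / Real.sqrt ε)) := by gcongr
    _ = 2 * Real.sqrt ε := by
      nth_rewrite 1 [← Real.mul_self_sqrt hε.le]
      field_simp

end Transfer

/-- long-time existence for the quasilinear discrete wave equation with
small data `εf, εg`: for all small `ε > 0` the maximal existence time satisfies
`T*(ε) ≥ K·log(log(1/ε))`, i.e. a classical solution exists on `[0,T]` for every
`T < K·log(log(1/ε))`. -/
theorem stmt13 (d : ℕ) (hd : 0 < d) (k : ℕ) (hk : k = 0 ∨ k = 1)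
    (gc : Fin d → Fin d → ℂ × (Fin (d + 1) → ℂ) → ℝ)
    (hgc : ∀ j l, Continuous (gc j l))
    (F : ℂ × (Fin (d + 1) → ℂ) → ℂ) (hF : ContDiff ℝ 1 F) (hF0 : F (0, 0) = 0)
    (f g : (Fin d → ℤ) → ℂ) (hf : w2 k f < ⊤) (hg : w2 k g < ⊤) :
    ∃ δ : ℝ, 0 < δ ∧ ∃ K : ℝ, 0 < K ∧
      ∀ ε : ℝ, 0 < ε → ε < δ →
        ∀ T : ℝ, 0 < T → T < K * Real.log (Real.log (1 / ε)) →
          ∃ u u1 u2,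
            QLSol d k gc F (fun m => (ε : ℂ) * f m) (fun m => (ε : ℂ) * g m)
              (Set.Icc 0 T) u u1 u2 := by
  have hD : ∀ j : Fin d, ∃ D : L2 d →L[ℝ] L2 d, ∀ U, pd j (unwt k U) = unwt k (D U) := fun j => by
    obtain ⟨D, h⟩ := exists_weighted_pd k hk j
    exact ⟨D, fun U => funext (h U)⟩
  choose D hD using hD
  obtain ⟨L, M, hL0, hM0, hL, hM, hu⟩ := exists_coeff_bounds gc hgc F hF (bd1 D)
  obtain ⟨Uf, rfl⟩ := exists_unwt_eq k hf
  obtain ⟨Ug, rfl⟩ := exists_unwt_eq k hg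
  have hF0' : F 0 = 0 := hF0
  set C := 1 + (M * bd2 D + L * bd1 D) with hC
  have hCpos : 0 < C := by
    have := bd1_nonneg D
    have := bd2_nonneg D
    positivity
  set p0 : Ph d := WithLp.toLp 2 (Uf, Ug) with hp0
  have hδ : 0 < (1 / (2 * ‖p0‖ + 1)) ^ 2 := by positivity
  refine ⟨min 1 ((1 / (2 * ‖p0‖ + 1)) ^ 2), lt_min one_pos hδ, 1 / C, by positivity,
    fun ε hε hεδ T hT hTε => ?_⟩
  have hε1 : ε < 1 := hεδ.trans_le (min_le_left _ _)
  have hlog : 0 < Real.log (1 / ε) := Real.log_pos (by rw [one_div]; exact (one_lt_inv₀ hε).2 hε1)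
  -- `T` lies below the threshold only if `exp (C T) < log (1/ε)`
  have hexp : Real.exp (C * T) ≤ Real.log (1 / ε) := by
    rw [← Real.le_log_iff_exp_le hlog]
    rw [one_div_mul_eq_div, lt_div_iff₀ hCpos] at hTε
    linarith
  have hsmall : ‖(ε : ℝ) • p0‖ * Real.exp (C * T) ≤ 1 := by
    rw [norm_smul, Real.norm_of_nonneg hε.le]
    have hsq : Real.sqrt ε ≤ 1 / (2 * ‖p0‖ + 1) :=
      Real.sqrt_le_iff.2 ⟨by positivity, (hεδ.trans_le (min_le_right _ _)).le⟩
    calc ε * ‖p0‖ * Real.exp (C * T) ≤ ε * ‖p0‖ * Real.log (1 / ε) := by gcongr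
      _ = ‖p0‖ * (ε * Real.log (1 / ε)) := by ring
      _ ≤ ‖p0‖ * (2 * (1 / (2 * ‖p0‖ + 1))) := by
        refine mul_le_mul_of_nonneg_left ((mul_log_le hε).trans ?_) (norm_nonneg _)
        gcongr
      _ = 2 * ‖p0‖ / (2 * ‖p0‖ + 1) := by ring
      _ ≤ 1 := div_le_one_of_le₀ (by linarith) (by positivity)
  have huc := field_uniform (k := k) hF0' hL hL0 hM hM0 hu
  obtain ⟨X, hX0, hX⟩ := peano_weak hCpos.le
    (fun p hp => norm_field_le (k := k) hF0' hL hL0 hM hM0 hp) huc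
    (field_weak hgc hF.continuous hF0' hL hL0 hM hM0) hT hsmall
  have hsc : ∀ U : L2 d, unwt k (ε • U) = fun m => (ε : ℂ) * unwt k U m := fun U => by
    funext m
    simp only [unwt, lp.coeFn_smul, Pi.smul_apply, Complex.real_smul]
    ring
  have hsol := qlsol_of_curve hD (fun p hp x => rhsVec_apply hF0' hL hL0 hM hM0 hp x) huc hX0 hX
  rw [WithLp.smul_fst, WithLp.smul_snd, hsc, hsc] at hsol
  exact ⟨_, _, _, hsol⟩
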